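/- arXiv:1109.3851 — 2 statements merged into one kernel-verified Lean document; each statement's English description precedes it below -/
import Mathlib

section
/- Let A be a finite-dimensional central simple algebra over a field F and let x ∈ A be an element whose minimal polynomial is p(t)^e for a monic irreducible polynomial p(t). Then there exists an element x^{ss} ∈ A (a semi-simplification of x) whose minimal polynomial equals p(t); in particular, there is an F-algebra embedding of the field F[t]/(p(t)) into A. -/
/-!
The argument works in `Module.End R M` for any semisimple module `M`. If `p(x)^(e+1) = 0` on `M`,
put `W = ker p(x)`. Then `W` is `x`-invariant and killed by `p(x)`, while the map induced by `x` on
`M ⧸ W` is killed by `p^e`. By induction `M ⧸ W` carries an endomorphism annihilated by `p`, and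
since `M ≃ W × (M ⧸ W)` by semisimplicity, gluing it to `x` restricted to `W` gives an endomorphism
of `M` annihilated by `p` (`exists_end_aeval_eq_zero`). So it is enough to split `M` along the
filtration by the kernels of the powers of `p(x)`, which need not be a maximal invariant chain.

A finite-dimensional simple algebra is semisimple as a left module over itself, and its
endomorphisms are the right multiplications, so the result applies to `A` and yields `y ∈ A` with
`p(y) = 0`. As `p` is monic irreducible, it is the minimal polynomial of `y`, and evaluation at `y`
factors through the field `F[t]/(p)`, hence is injective there.
-/

open Polynomial

/-- Polynomials in intertwined endomorphisms are intertwined. -/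
lemma aeval_apply_of_intertwine {F R M N : Type*} [Field F] [Ring R]
    [Algebra F R] [AddCommGroup M] [Module R M] [Module F M] [IsScalarTower F R M]
    [AddCommGroup N] [Module R N] [Module F N] [IsScalarTower F R N]
    (x : Module.End R M) (y : Module.End R N) (f : M →ₗ[R] N)
    (h : ∀ v, y (f v) = f (x v)) (q : Polynomial F) (v : M) :
    aeval y q (f v) = f (aeval x q v) := by
  induction q using Polynomial.induction_on' generalizing v with
  | add a b ha hb => simp [ha, hb]
  | monomial n c =>
    have hn : ∀ v, (y ^ n) (f v) = f ((x ^ n) v) := by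
      induction n with
      | zero => simp
      | succ n ih => intro v; rw [pow_succ, pow_succ]; simp [h, ih]
    rw [aeval_monomial, aeval_monomial, Module.End.mul_apply, Module.End.mul_apply, hn,
      Module.algebraMap_end_apply, Module.algebraMap_end_apply,
      ← algebraMap_smul R c, ← algebraMap_smul R c, map_smul]

/-- If some power of `p` annihilates an endomorphism of a semisimple module, then `p` itself
annihilates some endomorphism of that module. -/
lemma exists_end_aeval_eq_zero {F R : Type*} [Field F] [Ring R] [Algebra F R]
    (p : Polynomial F) (e : ℕ) :
    ∀ (M : Type) [AddCommGroup M] [Module R M] [Module F M] [IsScalarTower F R M]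
      [IsSemisimpleModule R M] (x : Module.End R M), aeval x (p ^ e) = 0 →
      ∃ y : Module.End R M, aeval y p = 0 := by
  induction e with
  | zero =>
    intro M _ _ _ _ _ x hx
    have h10 : (1 : Module.End R M) = 0 := by simpa using hx
    exact ⟨x, by rw [← one_mul (aeval x p), h10, zero_mul]⟩
  | succ e ih =>
    intro M _ _ _ _ _ x hx
    let W : Submodule R M := LinearMap.ker (aeval x p)
    have hW : ∀ w ∈ W, x w ∈ W := fun w hw => by
      have h := aeval_apply_of_intertwine x x x (fun _ => rfl) p w
      rw [LinearMap.mem_ker] at hw ⊢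
      rw [h, hw, map_zero]
    let xQ : Module.End R (M ⧸ W) := W.mapQ W x hW
    obtain ⟨z, hz⟩ := ih (M ⧸ W) xQ (by
      ext v
      have h := aeval_apply_of_intertwine x xQ W.mkQ (fun _ => rfl) (p ^ e) v
      have hv : aeval x (p ^ e) v ∈ W := by
        rw [LinearMap.mem_ker, ← Module.End.mul_apply, ← map_mul, ← pow_succ', hx]; rfl
      simp only [LinearMap.comp_apply]
      rw [h]
      simpa using hv)
    obtain ⟨C, hC⟩ := exists_isCompl W
    let E : (W × (M ⧸ W)) ≃ₗ[R] M :=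
      ((LinearEquiv.refl R W).prodCongr (W.quotientEquivOfIsCompl C hC)).trans
        (W.prodEquivOfIsCompl C hC)
    let xW : Module.End R W := x.restrict hW
    have hxW : aeval xW p = 0 := by
      ext w
      have h := aeval_apply_of_intertwine xW x W.subtype (fun _ => rfl) p w
      have hw : aeval x p (w : M) = 0 := w.2
      simpa [hw] using h.symm
    let y : Module.End R M := E.toLinearMap ∘ₗ (xW.prodMap z) ∘ₗ E.symm.toLinearMap
    refine ⟨y, LinearMap.ext fun v => ?_⟩
    obtain ⟨⟨w, u⟩, rfl⟩ := E.surjective v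
    have h1 := aeval_apply_of_intertwine xW y (E.toLinearMap ∘ₗ LinearMap.inl R W (M ⧸ W))
      (fun v => by simp [y]) p w
    have h2 := aeval_apply_of_intertwine z y (E.toLinearMap ∘ₗ LinearMap.inr R W (M ⧸ W))
      (fun v => by simp [y]) p u
    rw [hxW, LinearMap.zero_apply, map_zero] at h1
    rw [hz, LinearMap.zero_apply, map_zero] at h2
    have hs : E (w, u) = (E.toLinearMap ∘ₗ LinearMap.inl R W (M ⧸ W)) w
        + (E.toLinearMap ∘ₗ LinearMap.inr R W (M ⧸ W)) u := by
      simp [← map_add]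
    rw [hs, map_add, h1, h2]
    simp

/-- An endomorphism `y` of the left regular module is right multiplication by `y 1`, so `q(y)` is
right multiplication by `q(y 1)`. -/
lemma aeval_end_self_apply_one {F A : Type*} [Field F] [Ring A] [Algebra F A]
    (y : Module.End A A) (q : Polynomial F) : aeval y q 1 = aeval (y 1) q := by
  have hy : ∀ v, y v = v * y 1 := fun v => by
    rw [← smul_eq_mul, ← map_smul, smul_eq_mul, mul_one]
  induction q using Polynomial.induction_on' with
  | add a b ha hb => simp [ha, hb]
  | monomial n c =>
    have hn : (y ^ n) 1 = y 1 ^ n := by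
      induction n with
      | zero => simp
      | succ n ih => rw [pow_succ', Module.End.mul_apply, ih, hy, pow_succ]
    rw [aeval_monomial, aeval_monomial, Module.End.mul_apply, hn, Module.algebraMap_end_apply,
      Algebra.smul_def]

/-- Semi-simplification (from the proof of Lemma 6): if `x` is an element of a
finite-dimensional central simple algebra `A` over `F` whose minimal polynomial is `p^e`
with `p` monic irreducible, then there is an element `x^ss ∈ A` whose minimal polynomial
is `p`; in particular the field `F[t]/(p)` embeds into `A` as an `F`-algebra. -/
theorem exists_semisimplification_and_embedding
    (F A : Type) [Field F] [Ring A] [Algebra F A] [FiniteDimensional F A]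
    [Algebra.IsCentral F A] [IsSimpleRing A]
    (p : Polynomial F) (hmonic : p.Monic) (hirr : Irreducible p)
    (e : ℕ) (he : 0 < e) (x : A) (hx : minpoly F x = p ^ e) :
    (∃ xss : A, minpoly F xss = p) ∧
      ∃ ρ : AdjoinRoot p →ₐ[F] A, Function.Injective ρ := by
  have : IsArtinianRing A := IsArtinianRing.of_finite F A
  have : IsSemisimpleRing A := inferInstance
  let r : Module.End A A := LinearMap.toSpanSingleton A A x
  have hr : aeval r (p ^ e) = 0 := by
    refine LinearMap.ext_ring ?_
    have hr1 : r 1 = x := by simp [r]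
    rw [aeval_end_self_apply_one, hr1, ← hx, minpoly.aeval, LinearMap.zero_apply]
  obtain ⟨y, hy⟩ := exists_end_aeval_eq_zero p e A r hr
  have ha : aeval (y 1) p = 0 := by rw [← aeval_end_self_apply_one, hy, LinearMap.zero_apply]
  refine ⟨⟨y 1, (minpoly.eq_of_irreducible_of_monic hirr ha hmonic).symm⟩, ?_⟩
  have : Fact (Irreducible p) := ⟨hirr⟩
  let ρ : AdjoinRoot p →ₐ[F] A := Ideal.Quotient.liftₐ (Ideal.span {p}) (aeval (y 1))
    (fun q hq => by
      obtain ⟨s, rfl⟩ := Ideal.mem_span_singleton'.mp hq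
      rw [map_mul, ha, mul_zero])
  exact ⟨ρ, ρ.toRingHom.injective⟩
end

section
/- Let A be a quaternion algebra over a number field F (a central simple F-algebra with [A:F] = 4) and let f(t) = t² + at + b ∈ F[t] be a monic quadratic polynomial that is reducible over F. Then f(t) is the characteristic polynomial of some element of A if and only if f(t) has a double root or A is split (i.e. A ≅ Mat_2(F)). -/
/-! Write `f = (X - r)(X - s)` over `F`.

If `f` is the characteristic polynomial of `x` and `r ≠ s`, then Cayley–Hamilton, descended along
the injection `A → F̄ ⊗ A`, gives `(x - r)(x - s) = 0` with both factors nonzero: a scalar `x` would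
have a characteristic polynomial with a single root. Hence `A` is not a domain, and by
Wedderburn–Artin a four-dimensional central simple algebra with zero divisors is `Mat₂(F)`
(`nonempty_algEquiv_matrix_of_mul_eq_zero`).

Conversely, if `A` is split then `diag(r, s)` has characteristic polynomial `f`; if `r = s` then the
scalar `r ∈ A` does. The second case needs a splitting `F̄ ⊗ A ≃ Mat₂(F̄)` to exist for every `A`,
which rests on the simplicity of `F̄ ⊗ A` (`isSimpleRing_tensorProduct`).
-/

open Polynomial TensorProduct

/-- `f` is the characteristic polynomial of the element `x` of the finite-dimensional
central simple `F`-algebra `A`. -/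
def IsCharPoly (F : Type) [Field F] {A : Type} [Ring A] [Algebra F A]
    (x : A) (f : Polynomial F) : Prop :=
  ∃ (m : ℕ)
    (e : (AlgebraicClosure F ⊗[F] A) ≃ₐ[AlgebraicClosure F]
          Matrix (Fin m) (Fin m) (AlgebraicClosure F)),
    f.map (algebraMap F (AlgebraicClosure F)) =
      Matrix.charpoly (e ((1 : AlgebraicClosure F) ⊗ₜ[F] x))

/-- A field extension keeps a central simple algebra simple. In a nonzero two-sided ideal, take an
element `y` of minimal support with respect to an `F`-basis of `K`, normalised to have a coordinate
equal to `1`. The commutators of `y` with `1 ⊗ a` have smaller support, hence vanish, so all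
coordinates of `y` are central and `y = k ⊗ 1` is a unit. -/
theorem isSimpleRing_tensorProduct (F K A : Type*) [Field F] [Field K] [Algebra F K]
    [Ring A] [Algebra F A] [Algebra.IsCentral F A] [IsSimpleRing A] :
    IsSimpleRing (K ⊗[F] A) := by
  classical
  have hinj : Function.Injective (Algebra.TensorProduct.includeRight : A →ₐ[F] K ⊗[F] A) :=
    Algebra.TensorProduct.includeRight_injective (algebraMap F K).injective
  have : Nontrivial (K ⊗[F] A) := hinj.nontrivial
  let B := Module.Free.chooseBasis F K
  let φ := TensorProduct.equivFinsuppOfBasisLeft (N := A) B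
  have hl (a : A) (x : K ⊗[F] A) (j) : φ ((1 ⊗ₜ a) * x) j = a * φ x j := by
    induction x with
    | zero => simp
    | tmul k b => simp [φ]
    | add x y hx hy => simp [mul_add, hx, hy]
  have hr (a : A) (x : K ⊗[F] A) (j) : φ (x * (1 ⊗ₜ a)) j = φ x j * a := by
    induction x with
    | zero => simp
    | tmul k b => simp [φ]
    | add x y hx hy => simp [add_mul, hx, hy]
  refine IsSimpleRing.of_eq_bot_or_eq_top fun I => or_iff_not_imp_left.2 fun hI => ?_
  have hne : {x : K ⊗[F] A | x ∈ I ∧ x ≠ 0}.Nonempty := by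
    by_contra hcon
    apply hI
    rw [eq_bot_iff]
    intro x hx
    by_contra h0
    exact hcon ⟨x, hx, fun h => h0 (by simp [h])⟩
  obtain ⟨x, ⟨hxI, hx0⟩, hmin⟩ :=
    (measure fun x : K ⊗[F] A => (φ x).support.card).wf.has_min _ hne
  have hmin' : ∀ z ∈ I, (φ z).support ⊂ (φ x).support → z = 0 := fun z hz hlt => by
    by_contra h0
    exact hmin z ⟨hz, h0⟩ (Finset.card_lt_card hlt)
  obtain ⟨j0, hj0⟩ : ∃ j, φ x j ≠ 0 := by
    by_contra! h
    exact hx0 (φ.injective (by ext j; simp [h j]))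
  -- The `j0`-coordinates of elements of `I` supported inside the support of `x`.
  let J : TwoSidedIdeal A := TwoSidedIdeal.mk'
    {a | ∃ y ∈ I, (∀ j, φ x j = 0 → φ y j = 0) ∧ φ y j0 = a}
    ⟨0, I.zero_mem, by simp, by simp⟩
    (by
      rintro _ _ ⟨y, hy, hy', rfl⟩ ⟨z, hz, hz', rfl⟩
      exact ⟨y + z, I.add_mem hy hz, fun j hj => by simp [hy' j hj, hz' j hj], by simp⟩)
    (by
      rintro _ ⟨y, hy, hy', rfl⟩
      exact ⟨-y, I.neg_mem hy, fun j hj => by simp [hy' j hj], by simp⟩)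
    (by
      rintro a _ ⟨y, hy, hy', rfl⟩
      exact ⟨(1 ⊗ₜ a) * y, I.mul_mem_left _ _ hy, fun j hj => by simp [hl, hy' j hj], hl _ _ _⟩)
    (by
      rintro _ a ⟨y, hy, hy', rfl⟩
      exact ⟨y * (1 ⊗ₜ a), I.mul_mem_right _ _ hy, fun j hj => by simp [hr, hy' j hj], hr _ _ _⟩)
  have hJ : (1 : A) ∈ J := IsSimpleRing.one_mem_of_ne_zero_mem J hj0 <| by
    rw [TwoSidedIdeal.mem_mk']
    exact ⟨x, hxI, fun _ h => h, rfl⟩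
  rw [TwoSidedIdeal.mem_mk'] at hJ
  obtain ⟨y, hyI, hysupp, hy1⟩ := hJ
  have hcomm (a : A) : (1 ⊗ₜ a) * y - y * (1 ⊗ₜ a) = 0 := by
    refine hmin' _ (I.sub_mem (I.mul_mem_left _ _ hyI) (I.mul_mem_right _ _ hyI)) ?_
    rw [Finset.ssubset_iff_of_subset]
    · exact ⟨j0, by simpa using hj0, by simp [hl, hr, hy1]⟩
    · intro j
      simp only [Finsupp.mem_support_iff]
      exact mt fun h => by simp [hl, hr, hysupp j h]
  have hcen (j) : ∃ c : F, algebraMap F A c = φ y j := by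
    have : φ y j ∈ Subalgebra.center F A := by
      rw [Subalgebra.mem_center_iff]
      intro a
      have h := congrArg (fun z => φ z j) (hcomm a)
      simpa [hl, hr, sub_eq_zero] using h
    rwa [Algebra.IsCentral.center_eq_bot, Algebra.mem_bot] at this
  choose c hc using hcen
  obtain ⟨k, hk⟩ : ∃ k : K, y = k ⊗ₜ 1 := by
    have hrep : y = ∑ j ∈ (φ y).support, B j ⊗ₜ[F] φ y j :=
      (φ.symm_apply_apply y).symm.trans
        (TensorProduct.equivFinsuppOfBasisLeft_symm_apply B (φ y))
    refine ⟨∑ j ∈ (φ y).support, c j • B j, hrep.trans ?_⟩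
    rw [TensorProduct.sum_tmul]
    refine Finset.sum_congr rfl fun j _ => ?_
    rw [← hc, Algebra.algebraMap_eq_smul_one, TensorProduct.smul_tmul]
  have hk0 : k ≠ 0 := by
    rintro rfl
    simp [hk] at hy1
  have h1 : (1 : K ⊗[F] A) ∈ I := by
    have := I.mul_mem_left (k⁻¹ ⊗ₜ 1) _ hyI
    rwa [hk, Algebra.TensorProduct.tmul_mul_tmul, inv_mul_cancel₀ hk0, one_mul] at this
  exact (TwoSidedIdeal.one_mem_iff I).1 h1

/-- The Wedderburn–Artin decomposition `A ≃ Mat_n(D)` has `n² · [D : F] = 4`. Zero divisors exclude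
`n = 1`, so `n = 2` and `D = F`. -/
theorem nonempty_algEquiv_matrix_of_mul_eq_zero (F : Type*) {A : Type*} [Field F] [Ring A]
    [Algebra F A] [FiniteDimensional F A] [IsSimpleRing A] (hA : Module.finrank F A = 4)
    {x y : A} (hx : x ≠ 0) (hy : y ≠ 0) (hxy : x * y = 0) :
    Nonempty (A ≃ₐ[F] Matrix (Fin 2) (Fin 2) F) := by
  have := IsArtinianRing.of_finite F A
  obtain ⟨n, hn, D, _, _, _, ⟨e⟩⟩ :=
    IsSimpleRing.exists_algEquiv_matrix_divisionRing_finite F A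
  have hdim : n * n * Module.finrank F D = 4 := by
    rw [← hA, e.toLinearEquiv.finrank_eq, Module.finrank_matrix]
    simp
  have hn0 : n ≠ 0 := hn.out
  have hn1 : n ≠ 1 := by
    rintro rfl
    have h : e x * e y = 0 := by rw [← map_mul, hxy, map_zero]
    have h00 : e x 0 0 * e y 0 0 = 0 := by
      simpa [Matrix.mul_apply] using congrFun (congrFun h 0) 0
    have hz (z : A) (h : e z 0 0 = 0) : z = 0 := e.injective <| by
      ext i j
      fin_cases i; fin_cases j
      simpa using h
    rcases mul_eq_zero.1 h00 with h | h
    exacts [hx (hz x h), hy (hz y h)]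
  have hn2 : n ≤ 2 := by
    by_contra! h
    have : Module.finrank F D ≠ 0 := fun h => by simp [h] at hdim
    have : 1 ≤ Module.finrank F D := by omega
    nlinarith
  obtain rfl : n = 2 := by omega
  have hD : Module.finrank F D = 1 := by omega
  have hbij : Function.Bijective (Algebra.ofId F D) :=
    ⟨(algebraMap F D).injective, fun d => by
      obtain ⟨c, hc⟩ := (finrank_eq_one_iff_of_nonzero' (1 : D) one_ne_zero).1 hD d
      exact ⟨c, by simpa [Algebra.ofId_apply, Algebra.algebraMap_eq_smul_one] using hc⟩⟩
  exact ⟨e.trans (AlgEquiv.ofBijective _ hbij).symm.mapMatrix⟩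

theorem exists_algEquiv_tensorProduct_matrix (F K A : Type*) [Field F] [Field K] [Algebra F K]
    [IsAlgClosed K] [Ring A] [Algebra F A] [FiniteDimensional F A] [Algebra.IsCentral F A]
    [IsSimpleRing A] (hA : Module.finrank F A = 4) :
    Nonempty ((K ⊗[F] A) ≃ₐ[K] Matrix (Fin 2) (Fin 2) K) := by
  have := isSimpleRing_tensorProduct F K A
  obtain ⟨n, _, ⟨e⟩⟩ := IsSimpleRing.exists_algEquiv_matrix_of_isAlgClosed K (K ⊗[F] A)
  have hdim : n * n = 4 := by
    rw [← hA, ← Module.finrank_baseChange (R := K), e.toLinearEquiv.finrank_eq,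
      Module.finrank_matrix]
    simp
  obtain rfl : n = 2 := by nlinarith
  exact ⟨e⟩

/-- The matrix algebra commutes with base change, as an isomorphism of algebras over the larger
field; `matrixEquivTensor` is only linear over the smaller one. -/
noncomputable def tensorMatrixAlgEquiv (F K : Type*) [Field F] [Field K] [Algebra F K] :
    (K ⊗[F] Matrix (Fin 2) (Fin 2) F) ≃ₐ[K] Matrix (Fin 2) (Fin 2) K :=
  AlgEquiv.ofRingEquiv (f := (matrixEquivTensor (Fin 2) F K).symm.toRingEquiv) fun k => by
    change (matrixEquivTensor (Fin 2) F K).symm (k ⊗ₜ 1) = _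
    rw [matrixEquivTensor_apply_symm, Algebra.algebraMap_eq_smul_one]
    simp

theorem charpoly_algebraMap {K : Type*} [Field K] (m : ℕ) (c : K) :
    (algebraMap K (Matrix (Fin m) (Fin m) K) c).charpoly = (X - C c) ^ m := by
  rw [Matrix.algebraMap_eq_diagonal, Matrix.charpoly_diagonal]
  simp

/-- For a quaternion algebra `A` over a number field `F` and a monic quadratic polynomial
`f(t) = t² + a·t + b ∈ F[t]` which is reducible over `F`, `f` is a characteristic
polynomial of an element of `A` iff `f` has a double root or `A` is split, i.e.
`A ≅ Mat₂(F)`. -/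
theorem quaternion_reducible_isCharPoly_iff
    (F A : Type) [Field F] [NumberField F] [Ring A] [Algebra F A]
    [FiniteDimensional F A] [Algebra.IsCentral F A] [IsSimpleRing A]
    (hA : Module.finrank F A = 4)
    (a b : F) (f : Polynomial F) (hf : f = X ^ 2 + C a * X + C b)
    (hred : ¬ Irreducible f) :
    (∃ x : A, IsCharPoly F x f) ↔
      (∃ r : F, f = (X - C r) ^ 2) ∨ Nonempty (A ≃ₐ[F] Matrix (Fin 2) (Fin 2) F) := by
  have hroot : ∃ r : F, f.IsRoot r := by
    have hdeg : f.natDegree = 2 := by rw [hf]; compute_degree!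
    by_contra! h
    refine hred ((irreducible_iff_roots_eq_zero_of_degree_le_three hdeg.ge (by omega)).2 ?_)
    exact Multiset.eq_zero_of_forall_notMem fun r hr => h r (isRoot_of_mem_roots hr)
  obtain ⟨r, hr⟩ := hroot
  obtain ⟨s, hs⟩ : ∃ s : F, f = (X - C r) * (X - C s) := by
    refine ⟨-a - r, ?_⟩
    have hb : b = -(r ^ 2 + a * r) := by
      have : r ^ 2 + a * r + b = 0 := by simpa [hf] using hr
      linear_combination this
    rw [hf, hb]
    simp only [map_neg, map_add, map_mul, map_pow, map_sub]
    ring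
  clear hr hf hred
  subst hs
  constructor
  · rintro ⟨x, m, e, he⟩
    by_cases hrs : r = s
    · exact .inl ⟨r, by rw [hrs, sq]⟩
    refine .inr ?_
    let K := AlgebraicClosure F
    have hscal (c : F) : e (1 ⊗ₜ algebraMap F A c) = algebraMap K _ (algebraMap F K c) := by
      rw [← e.commutes]
      congr 1
      simp [Algebra.algebraMap_eq_smul_one, K, Algebra.TensorProduct.one_def]
    have hinj : Function.Injective fun z : A => e (1 ⊗ₜ z) := e.injective.comp
      (Algebra.TensorProduct.includeRight_injective (algebraMap F K).injective)
    have hne (c d : F) (hcd : c ≠ d)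
        (h : (X - C r) * (X - C s) = (X - C c) * (X - C d)) : x - algebraMap F A c ≠ 0 := by
      intro hx
      rw [h, sub_eq_zero.1 hx, hscal, charpoly_algebraMap] at he
      have h' := congrArg (Polynomial.eval (algebraMap F K d)) he
      simp only [Polynomial.map_mul, Polynomial.map_sub, map_X, map_C, eval_mul, eval_sub, eval_X,
        eval_C, eval_pow, K, sub_self, mul_zero] at h'
      exact hcd ((algebraMap F K).injective (sub_eq_zero.1 (eq_zero_of_pow_eq_zero h'.symm)).symm)
    refine nonempty_algEquiv_matrix_of_mul_eq_zero F hA (hne r s hrs rfl)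
      (hne s r (Ne.symm hrs) (mul_comm _ _)) (hinj ?_)
    have hCH := Matrix.aeval_self_charpoly (e (1 ⊗ₜ x))
    rw [← he] at hCH
    simp only [Polynomial.map_mul, Polynomial.map_sub, map_X, map_C, map_mul, map_sub, aeval_X,
      aeval_C] at hCH
    have hmul (y z : A) : e (1 ⊗ₜ (y * z)) = e (1 ⊗ₜ y) * e (1 ⊗ₜ z) := by
      rw [← map_mul, Algebra.TensorProduct.tmul_mul_tmul, one_mul]
    simp only [hmul, TensorProduct.tmul_sub, map_sub, hscal, TensorProduct.tmul_zero, map_zero]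
    exact hCH
  · rintro (⟨c, hc⟩ | ⟨⟨φ⟩⟩)
    · obtain ⟨e⟩ := exists_algEquiv_tensorProduct_matrix F (AlgebraicClosure F) A hA
      refine ⟨algebraMap F A c, 2, e, ?_⟩
      have : (1 : AlgebraicClosure F) ⊗ₜ[F] algebraMap F A c =
          algebraMap (AlgebraicClosure F) _ (algebraMap F _ c) := by
        simp [Algebra.algebraMap_eq_smul_one, Algebra.TensorProduct.one_def]
      rw [this, e.commutes, charpoly_algebraMap, hc]
      simp
    · refine ⟨φ.symm (Matrix.diagonal ![r, s]), 2,
        (Algebra.TensorProduct.congr AlgEquiv.refl φ).trans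
          (tensorMatrixAlgEquiv F (AlgebraicClosure F)), ?_⟩
      have : ((Algebra.TensorProduct.congr AlgEquiv.refl φ).trans
          (tensorMatrixAlgEquiv F (AlgebraicClosure F)))
            (1 ⊗ₜ φ.symm (Matrix.diagonal ![r, s])) =
          (Matrix.diagonal ![r, s]).map (algebraMap F (AlgebraicClosure F)) := by
        simp only [AlgEquiv.trans_apply, Algebra.TensorProduct.congr_apply,
          Algebra.TensorProduct.map_tmul, AlgEquiv.coe_toAlgHom, AlgEquiv.apply_symm_apply, map_one]
        change (matrixEquivTensor (Fin 2) F (AlgebraicClosure F)).symm (1 ⊗ₜ _) = _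
        rw [matrixEquivTensor_apply_symm, one_smul]
      rw [this, Matrix.charpoly_map, Matrix.charpoly_diagonal]
      simp
end
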